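/- Let X be a real Banach space with a Schauder basis (e_j)_{j≥1}, i.e. every x ∈ X has a unique representation x = Σ_{j=1}^∞ a_j e_j with a_j ∈ ℝ and the partial sums converging to x in norm. For k ≥ 1 set Y_k = span{e_1, …, e_k} and Z_k = the closure of span{e_j : j ≥ k}. Let L : X → ℝ be a C¹ functional (Fréchet differentiable with continuous derivative dL : X → X*) which is even (L(−u) = L(u) for all u ∈ X). Fix k ≥ 1 and suppose: (L₃) there exist r(k) > 0 and a(k) ∈ ℝ such that sup{L(u) : u ∈ Y_k, ‖u‖ = r(k)} ≤ a(k); (L₄) there exists b(k) ∈ ℝ such that L(u) ≥ b(k) for all u ∈ ℝe_k ⊕ Z_{k+1}. Then b(k) ≤ a(k), and if in addition L satisfies the (PS)_c condition for every c ∈ [b(k), a(k)], then L has a critical point with critical value in [b(k), a(k)]: there exists u ∈ X with dL(u) = 0 and b(k) ≤ L(u) ≤ a(k). -/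

import Mathlib

open Filter Topology

/-- `L` satisfies the `(PS)_c` condition (w.r.t. the derivative `dL`). -/
def PalaisSmaleC {X : Type*} [NormedAddCommGroup X] [NormedSpace ℝ X]
    (L : X → ℝ) (dL : X → X →L[ℝ] ℝ) (c : ℝ) : Prop :=
  ∀ x : ℕ → X, Tendsto (fun n => L (x n)) atTop (𝓝 c) →
    Tendsto (fun n => ‖dL (x n)‖) atTop (𝓝 0) →
    ∃ (y : X) (φ : ℕ → ℕ), StrictMono φ ∧ Tendsto (fun n => x (φ n)) atTop (𝓝 y)

/-!
An odd map from the sphere of `Y_k` into `X` meets every closed subspace of codimension smaller than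
`dim Y_k`, by the Borsuk-Ulam theorem. Applied to `W = ℝe_k ⊕ Z_{k+1}`, whose codimension is at most
`k - 1`, this gives `b ≤ a` for the inclusion, and it shows that the minimax value of `L` over all
odd maps lies in `[b, a]`. Ekeland's principle on the complete space of these maps yields almost
minimal maps which cannot be deformed along an odd pseudo-gradient, hence points with values almost
in `[b, a]` and small derivative; the Palais-Smale condition lets them converge.

The Borsuk-Ulam theorem is proved by a mod 2 count. An odd map without zeros gives antipodal
two-colourings `p₁, …, pₙ` of the `n`-sphere, one for the sign of each coordinate, and
`δp₁ ∪ ⋯ ∪ δpₙ` equals `1` on a hemisphere, by induction on `n`: the hemisphere is bounded by a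
smaller hemisphere and its antipode, on which the antipodal primitive `p₁ ∪ δp₂ ∪ ⋯ ∪ δpₙ` adds up
to `δp₂ ∪ ⋯ ∪ δpₙ`. Thus some arbitrarily small simplex sees sign changes of every coordinate.
-/

/-- Mod-2 chains on ordered simplices, encoded by the lists of their vertices. Repeated vertices are
allowed and the empty list is a simplex, so that the complex of ordered chains is augmented. -/
abbrev OrderedChain (E : Type*) := List E →₀ ZMod 2

namespace OrderedChain

open Finsupp (single)

variable {E F M : Type*} [AddCommGroup M] [Module (ZMod 2) M]

lemma linearMap_ext {T T' : OrderedChain E →ₗ[ZMod 2] M}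
    (h : ∀ l, T (single l 1) = T' (single l 1)) : T = T' :=
  Finsupp.lhom_ext' fun l => LinearMap.ext_ring (h l)

lemma map_mem_of_mem_supported (T : OrderedChain E →ₗ[ZMod 2] M) {S : Set (List E)}
    {P : Submodule (ZMod 2) M} (h : ∀ l ∈ S, T (single l 1) ∈ P) {c : OrderedChain E}
    (hc : c ∈ Finsupp.supported (ZMod 2) (ZMod 2) S) : T c ∈ P := by
  have hspan : Submodule.span (ZMod 2) ((fun l => single l 1) '' S) ≤ P.comap T :=
    Submodule.span_le.2 (Set.image_subset_iff.2 h)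
  rw [Finsupp.supported_eq_span_single] at hc
  exact hspan hc

/-- The cone (join) of a chain with the apex `x`. -/
noncomputable def cone (x : E) : OrderedChain E →ₗ[ZMod 2] OrderedChain E :=
  Finsupp.lmapDomain (ZMod 2) (ZMod 2) (List.cons x)

@[simp]
lemma cone_single (x : E) (l : List E) : cone x (single l 1) = single (x :: l) 1 := by
  simp [cone]

/-- The pushforward of chains under a map of the vertices. -/
noncomputable def map (f : E → F) : OrderedChain E →ₗ[ZMod 2] OrderedChain F :=
  Finsupp.lmapDomain (ZMod 2) (ZMod 2) (List.map f)

@[simp]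
lemma map_single (f : E → F) (l : List E) : map f (single l 1) = single (l.map f) 1 := by
  simp [map]

lemma map_cone (f : E → F) (x : E) (c : OrderedChain E) :
    map f (cone x c) = cone (f x) (map f c) := by
  have h : map f ∘ₗ cone x = cone (f x) ∘ₗ map f := linearMap_ext fun l => by simp
  exact LinearMap.congr_fun h c

lemma map_id (c : OrderedChain E) : map id c = c := by
  simp [map]

lemma map_neg_map_neg [InvolutiveNeg E] (c : OrderedChain E) :
    map Neg.neg (map Neg.neg c) = c := by
  simp [map, ← Finsupp.mapDomain_comp]

/-! ### The boundary operator -/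

/-- The sum of the codimension one faces of a simplex. -/
noncomputable def faces : List E → OrderedChain E
  | [] => 0
  | x :: l => single l 1 + cone x (faces l)

/-- The augmented boundary operator. -/
noncomputable def boundary : OrderedChain E →ₗ[ZMod 2] OrderedChain E :=
  Finsupp.linearCombination (ZMod 2) faces

@[simp]
lemma boundary_single_nil : boundary (single ([] : List E) 1) = 0 := by
  simp [boundary, faces]

@[simp]
lemma boundary_single_cons (x : E) (l : List E) :
    boundary (single (x :: l) 1) = single l 1 + cone x (boundary (single l 1)) := by
  simp [boundary, faces]

lemma boundary_cone (x : E) (c : OrderedChain E) :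
    boundary (cone x c) = c + cone x (boundary c) := by
  have h : boundary ∘ₗ cone x = LinearMap.id + cone x ∘ₗ boundary :=
    linearMap_ext fun l => by simp
  exact LinearMap.congr_fun h c

lemma boundary_boundary (c : OrderedChain E) : boundary (boundary c) = 0 := by
  have h : (boundary ∘ₗ boundary : OrderedChain E →ₗ[ZMod 2] OrderedChain E) = 0 :=
    linearMap_ext fun l => by
      induction l with
      | nil => simp
      | cons x l ih =>
        simp only [LinearMap.comp_apply, LinearMap.zero_apply] at ih ⊢
        rw [boundary_single_cons, map_add, boundary_cone, ih, map_zero, add_zero,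
          ZModModule.add_self]
  exact LinearMap.congr_fun h c

lemma boundary_map (f : E → F) (c : OrderedChain E) : boundary (map f c) = map f (boundary c) := by
  have h : boundary ∘ₗ map f = map f ∘ₗ boundary := linearMap_ext fun l => by
    induction l with
    | nil => simp
    | cons x l ih =>
      simp only [LinearMap.comp_apply, map_single] at ih ⊢
      simp only [List.map_cons, boundary_single_cons, map_add, map_single, map_cone, ih]
  exact LinearMap.congr_fun h c

/-! ### The prism operator -/

/-- The triangulation `∑ᵢ [f x₀, …, f xᵢ, g xᵢ, …, g xₘ]` of the prism between the images of the
simplex `[x₀, …, xₘ]` under `f` and `g`. -/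
noncomputable def prismSimplex (f g : E → F) : List E → OrderedChain F
  | [] => 0
  | x :: l => single (f x :: g x :: l.map g) 1 + cone (f x) (prismSimplex f g l)

/-- The prism operator, a chain homotopy between `map f` and `map g`. -/
noncomputable def prism (f g : E → F) : OrderedChain E →ₗ[ZMod 2] OrderedChain F :=
  Finsupp.linearCombination (ZMod 2) (prismSimplex f g)

@[simp]
lemma prism_single (f g : E → F) (l : List E) : prism f g (single l 1) = prismSimplex f g l := by
  simp [prism]

lemma prism_cone (f g : E → F) (x : E) (c : OrderedChain E) :
    prism f g (cone x c) = cone (f x) (cone (g x) (map g c)) + cone (f x) (prism f g c) := by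
  have h : prism f g ∘ₗ cone x =
      cone (f x) ∘ₗ cone (g x) ∘ₗ map g + cone (f x) ∘ₗ prism f g :=
    linearMap_ext fun l => by simp [prismSimplex]
  exact LinearMap.congr_fun h c

lemma boundary_prism (f g : E → F) (c : OrderedChain E) :
    boundary (prism f g c) + prism f g (boundary c) = map f c + map g c := by
  have h : boundary ∘ₗ prism f g + prism f g ∘ₗ boundary = map f + map g :=
    linearMap_ext fun l => by
      induction l with
      | nil => simp [prismSimplex, ZModModule.add_self]
      | cons x l ih =>
        simp only [LinearMap.add_apply, LinearMap.comp_apply, prism_single, map_single] at ih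
        simp only [LinearMap.add_apply, LinearMap.comp_apply, map_single, prism_single,
          prismSimplex, boundary_single_cons, map_add, boundary_cone, cone_single, prism_cone,
          ← boundary_map, List.map_cons]
        have hcone := congrArg (cone (f x)) ih
        simp only [map_add, cone_single] at hcone
        linear_combination (norm := skip) (1 : ZMod 2) • hcone
        match_scalars <;> decide
  exact LinearMap.congr_fun h c

lemma boundary_sum_prism (f : ℕ → E → F) {z : OrderedChain E} (hz : boundary z = 0) (N : ℕ) :
    boundary (∑ j ∈ Finset.range N, prism (f j) (f (j + 1)) z) = map (f 0) z + map (f N) z := by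
  induction N with
  | zero => simp [ZModModule.add_self]
  | succ N ih =>
    have hprism := boundary_prism (f N) (f (N + 1)) z
    rw [hz, map_zero, add_zero] at hprism
    rw [Finset.sum_range_succ, map_add, ih, hprism, ZModModule.add_add_add_cancel]

/-! ### Cup products of coboundaries -/

/-- The cochain `δp₁ ∪ ⋯ ∪ δpₙ` on simplices, where `ps = [p₁, …, pₙ]`; it vanishes on simplices
of dimension other than `n`. -/
def cupCoboundary : List (E → ZMod 2) → List E → ZMod 2
  | [], [_] => 1
  | p :: ps, x :: y :: l => (p x + p y) * cupCoboundary ps (y :: l)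
  | _, _ => 0

/-- The cochain `p ∪ δp₁ ∪ ⋯ ∪ δpₙ` on simplices, a primitive of `δp ∪ δp₁ ∪ ⋯ ∪ δpₙ`. -/
def cupPrimitive (p : E → ZMod 2) (ps : List (E → ZMod 2)) : List E → ZMod 2
  | [] => 0
  | x :: l => p x * cupCoboundary ps (x :: l)

/-- The linear extension of a cochain from simplices to chains. -/
noncomputable def eval (φ : List E → ZMod 2) : OrderedChain E →ₗ[ZMod 2] ZMod 2 :=
  Finsupp.linearCombination (ZMod 2) φ

@[simp]
lemma eval_single (φ : List E → ZMod 2) (l : List E) : eval φ (single l 1) = φ l := by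
  simp [eval]

lemma eval_cupPrimitive_cone (p : E → ZMod 2) (ps : List (E → ZMod 2)) (x : E)
    (c : OrderedChain E) :
    eval (cupPrimitive p ps) (cone x c) = p x * eval (cupCoboundary ps) (cone x c) := by
  have h : eval (cupPrimitive p ps) ∘ₗ cone x = p x • (eval (cupCoboundary ps) ∘ₗ cone x) :=
    linearMap_ext fun l => by simp [cupPrimitive]
  exact LinearMap.congr_fun h c

lemma eval_cupPrimitive_boundary {p : E → ZMod 2} {ps : List (E → ZMod 2)}
    (hps : eval (cupCoboundary ps) ∘ₗ boundary = 0) (c : OrderedChain E) :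
    eval (cupPrimitive p ps) (boundary c) = eval (cupCoboundary (p :: ps)) c := by
  have h : eval (cupPrimitive p ps) ∘ₗ boundary = eval (cupCoboundary (p :: ps)) :=
    linearMap_ext fun l => by
      rcases l with _ | ⟨x, _ | ⟨y, l⟩⟩
      · simp [cupCoboundary]
      · simp [cupCoboundary, cupPrimitive]
      · have hcone : eval (cupCoboundary ps) (cone x (boundary (single (y :: l) 1))) =
            cupCoboundary ps (y :: l) := by
          have hcycle := LinearMap.congr_fun hps (single (x :: y :: l) 1)
          rw [LinearMap.comp_apply, boundary_single_cons, map_add, eval_single,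
            LinearMap.zero_apply, CharTwo.add_eq_zero] at hcycle
          exact hcycle.symm
        rw [LinearMap.comp_apply, boundary_single_cons, map_add, eval_cupPrimitive_cone, hcone,
          eval_single, eval_single, cupPrimitive, cupCoboundary]
        ring
  exact LinearMap.congr_fun h c

lemma eval_cupCoboundary_comp_boundary (ps : List (E → ZMod 2)) :
    eval (cupCoboundary ps) ∘ₗ boundary = 0 := by
  induction ps with
  | nil =>
    have hcone (x y : E) (c : OrderedChain E) :
        eval (cupCoboundary []) (cone x (cone y c)) = 0 := by
      have h : eval (cupCoboundary []) ∘ₗ cone x ∘ₗ cone y = 0 :=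
        linearMap_ext fun l => by simp [cupCoboundary]
      exact LinearMap.congr_fun h c
    refine linearMap_ext fun l => ?_
    rcases l with _ | ⟨x, _ | ⟨y, _ | ⟨z, l⟩⟩⟩ <;>
      simp [cupCoboundary, hcone, CharTwo.add_self_eq_zero]
  | cons p ps ih =>
    refine LinearMap.ext fun c => ?_
    rw [LinearMap.comp_apply, ← eval_cupPrimitive_boundary ih, boundary_boundary, map_zero,
      LinearMap.zero_apply]

lemma exists_ne_of_cupCoboundary_ne_zero {ps : List (E → ZMod 2)} {l : List E}
    (h : cupCoboundary ps l ≠ 0) {p : E → ZMod 2} (hp : p ∈ ps) :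
    ∃ v ∈ l, ∃ w ∈ l, p v ≠ p w := by
  induction ps generalizing l with
  | nil => simp at hp
  | cons q ps ih =>
    rcases l with _ | ⟨x, _ | ⟨y, l⟩⟩
    · simp [cupCoboundary] at h
    · simp [cupCoboundary] at h
    rw [cupCoboundary] at h
    rcases List.mem_cons.1 hp with rfl | hp
    · refine ⟨x, by simp, y, by simp, fun hxy => left_ne_zero_of_mul h ?_⟩
      rw [hxy, CharTwo.add_self_eq_zero]
    · obtain ⟨v, hv, w, hw, hvw⟩ := ih (right_ne_zero_of_mul h) hp
      exact ⟨v, List.mem_cons_of_mem x hv, w, List.mem_cons_of_mem x hw, hvw⟩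

/-! ### Antipodal colourings -/

/-- The two-colouring `p` separates the antipodal points of `K`. -/
def IsAntipodalOn [Neg E] (p : E → ZMod 2) (K : Set E) : Prop :=
  ∀ v ∈ K, p (-v) = p v + 1

lemma cupCoboundary_map_neg [Neg E] {K : Set E} {ps : List (E → ZMod 2)}
    (hps : ∀ p ∈ ps, IsAntipodalOn p K) {l : List E} (hl : ∀ v ∈ l, v ∈ K) :
    cupCoboundary ps (l.map Neg.neg) = cupCoboundary ps l := by
  induction ps generalizing l with
  | nil => rcases l with _ | ⟨x, _ | ⟨y, l⟩⟩ <;> simp [cupCoboundary]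
  | cons p ps ih =>
    rcases l with _ | ⟨x, _ | ⟨y, l⟩⟩
    · rfl
    · rfl
    have hp := hps p List.mem_cons_self
    have htail := ih (fun q hq => hps q (List.mem_cons_of_mem p hq))
      fun v hv => hl v (List.mem_cons_of_mem x hv)
    rw [List.map_cons] at htail
    rw [List.map_cons, List.map_cons, cupCoboundary, cupCoboundary, htail,
      hp x (hl x (by simp)), hp y (hl y (by simp)), add_add_add_comm, CharTwo.add_self_eq_zero,
      add_zero]

lemma eval_cupPrimitive_add_map_neg [Neg E] {K : Set E} {p : E → ZMod 2}
    {ps : List (E → ZMod 2)} (hp : IsAntipodalOn p K) (hps : ∀ q ∈ ps, IsAntipodalOn q K)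
    {c : OrderedChain E}
    (hc : c ∈ Finsupp.supported (ZMod 2) (ZMod 2) {l | ∀ v ∈ l, v ∈ K}) :
    eval (cupPrimitive p ps) (c + map Neg.neg c) = eval (cupCoboundary ps) c := by
  let T := eval (cupPrimitive p ps) + eval (cupPrimitive p ps) ∘ₗ map Neg.neg -
    eval (cupCoboundary ps)
  suffices hT : T c ∈ (⊥ : Submodule (ZMod 2) (ZMod 2)) by
    rw [map_add]
    exact sub_eq_zero.1 hT
  refine map_mem_of_mem_supported T (fun l hl => ?_) hc
  rw [Submodule.mem_bot]
  rcases l with _ | ⟨x, l⟩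
  · cases ps <;> simp [T, cupPrimitive, cupCoboundary]
  have hneg := cupCoboundary_map_neg hps hl
  rw [List.map_cons] at hneg
  simp only [T, LinearMap.sub_apply, LinearMap.add_apply, LinearMap.comp_apply, map_single,
    eval_single, List.map_cons, cupPrimitive, hneg, hp x (hl x List.mem_cons_self)]
  rw [add_mul, one_mul, ← add_assoc, CharTwo.add_self_eq_zero, zero_add, sub_self]

/-- Colour by the sign of `g`, breaking ties by a linear order. -/
lemma exists_isAntipodalOn_compl_zero [AddCommGroup E] [IsAddTorsionFree E] {g : E → ℝ}
    (hg : ∀ x, g (-x) = -g x) :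
    ∃ p : E → ZMod 2, IsAntipodalOn p {0}ᶜ ∧ ∀ v w, p v ≠ p w → g v * g w ≤ 0 := by
  classical
  let _ : LinearOrder E := linearOrderOfSTO WellOrderingRel
  refine ⟨fun x => if 0 < g x ∨ (g x = 0 ∧ x < -x) then 1 else 0, fun v hv => ?_,
    fun v w hvw => ?_⟩
  · have hne : v ≠ -v := fun h => hv (self_eq_neg.1 h)
    simp only [hg, neg_neg, neg_pos, neg_eq_zero]
    rcases lt_trichotomy (g v) 0 with h | h | h
    · simp [h, h.ne, h.not_gt]
    · rcases lt_or_gt_of_ne hne with h' | h' <;>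
        simp [h, h', h'.not_gt, CharTwo.add_self_eq_zero]
    · simp [h, h.ne', h.not_gt, CharTwo.add_self_eq_zero]
  · by_contra! hpos
    refine hvw ?_
    rcases pos_and_pos_or_neg_and_neg_of_mul_pos hpos with ⟨hv, hw⟩ | ⟨hv, hw⟩
    · simp [hv, hw]
    · simp [hv.ne, hw.ne, hv.not_gt, hw.not_gt]

/-! ### Filling cycles by small simplices -/

/-- The chains all of whose simplices have `m` vertices, which lie in `K` and whose mutual distances
are at most `D`. -/
def smallChains [PseudoMetricSpace E] (K : Set E) (D : ℝ) (m : ℕ) :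
    Submodule (ZMod 2) (OrderedChain E) :=
  Finsupp.supported (ZMod 2) (ZMod 2)
    {l | l.length = m ∧ (∀ v ∈ l, v ∈ K) ∧ ∀ v ∈ l, ∀ w ∈ l, dist v w ≤ D}

lemma smallChains_mono [PseudoMetricSpace E] {K K' : Set E} (hK : K ⊆ K') {D D' : ℝ}
    (hD : D ≤ D') (m : ℕ) : smallChains K D m ≤ smallChains K' D' m :=
  Finsupp.supported_mono fun _ hl =>
    ⟨hl.1, fun v hv => hK (hl.2.1 v hv), fun v hv w hw => (hl.2.2 v hv w hw).trans hD⟩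

lemma map_isometry_mem_smallChains [PseudoMetricSpace E] [PseudoMetricSpace F] {f : E → F}
    (hf : Isometry f) {K : Set E} {K' : Set F} (hK : Set.MapsTo f K K') {D : ℝ} {m : ℕ}
    {c : OrderedChain E} (hc : c ∈ smallChains K D m) : map f c ∈ smallChains K' D m := by
  refine map_mem_of_mem_supported (map f) (fun l hl => ?_) hc
  rw [map_single]
  refine Finsupp.single_mem_supported _ _ ⟨by rw [List.length_map, hl.1], ?_, ?_⟩
  · exact List.forall_mem_map.2 fun v hv => hK (hl.2.1 v hv)
  · exact List.forall_mem_map.2 fun v hv => List.forall_mem_map.2 fun w hw =>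
      (hf.dist_eq v w).trans_le (hl.2.2 v hv w hw)

lemma cone_map_const_mem_smallChains [PseudoMetricSpace E] {K : Set E} {D : ℝ} {m : ℕ}
    {c : OrderedChain E} (hc : c ∈ smallChains K D m) (x : E) :
    cone x (map (fun _ => x) c) ∈ smallChains {x} 0 (m + 1) := by
  refine map_mem_of_mem_supported (cone x ∘ₗ map fun _ => x) (fun l hl => ?_) hc
  have hx : ∀ v ∈ x :: l.map fun _ => x, v = x := by simp
  rw [LinearMap.comp_apply, map_single, cone_single]
  refine Finsupp.single_mem_supported _ _ ⟨by simp [hl.1], hx, fun v hv w hw => ?_⟩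
  rw [hx v hv, hx w hw, dist_self]

lemma prismSimplex_mem_supported (f g : E → F) (l : List E) :
    prismSimplex f g l ∈ Finsupp.supported (ZMod 2) (ZMod 2)
      {l' | l'.length = l.length + 1 ∧
        ∀ v ∈ l', ∃ p ∈ ({f, g} : Set (E → F)), ∃ u ∈ l, p u = v} := by
  induction l with
  | nil => exact Submodule.zero_mem _
  | cons x l ih =>
    refine Submodule.add_mem _ (Finsupp.single_mem_supported _ _ ?_)
      (map_mem_of_mem_supported (cone (f x)) (fun l' hl' => ?_) ih)
    · exact ⟨by simp, List.forall_mem_cons.2 ⟨⟨f, by simp, x, by simp, rfl⟩,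
        List.forall_mem_cons.2 ⟨⟨g, by simp, x, by simp, rfl⟩,
          List.forall_mem_map.2 fun u hu => ⟨g, by simp, u, by simp [hu], rfl⟩⟩⟩⟩
    · rw [cone_single]
      refine Finsupp.single_mem_supported _ _ ⟨by simp [hl'.1],
        List.forall_mem_cons.2 ⟨⟨f, by simp, x, by simp, rfl⟩, fun v hv => ?_⟩⟩
      obtain ⟨p, hp, u, hu, hpu⟩ := hl'.2 v hv
      exact ⟨p, hp, u, List.mem_cons_of_mem x hu, hpu⟩

lemma prism_mem_smallChains [PseudoMetricSpace E] [PseudoMetricSpace F] {f g : E → F} {K : Set E}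
    {K' : Set F} (hK : ∀ p ∈ ({f, g} : Set (E → F)), Set.MapsTo p K K') {D D' : ℝ}
    (hD : ∀ p ∈ ({f, g} : Set (E → F)), ∀ q ∈ ({f, g} : Set (E → F)), ∀ u ∈ K, ∀ v ∈ K,
      dist u v ≤ D → dist (p u) (q v) ≤ D')
    {m : ℕ} {c : OrderedChain E} (hc : c ∈ smallChains K D m) :
    prism f g c ∈ smallChains K' D' (m + 1) := by
  refine map_mem_of_mem_supported (prism f g) (fun l hl => ?_) hc
  rw [prism_single]
  refine Finsupp.supported_mono ?_ (prismSimplex_mem_supported f g l)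
  refine fun l' hl' => ⟨by rw [hl'.1, hl.1], fun v hv => ?_, fun v hv w hw => ?_⟩
  · obtain ⟨p, hp, u, hu, rfl⟩ := hl'.2 v hv
    exact hK p hp (hl.2.1 u hu)
  · obtain ⟨p, hp, u, hu, rfl⟩ := hl'.2 v hv
    obtain ⟨q, hq, u', hu', rfl⟩ := hl'.2 w hw
    exact hD p hp q hq u (hl.2.1 u hu) u' (hl.2.1 u' hu') (hl.2.2 u hu u' hu')

section Filling

variable [NormedAddCommGroup E] [NormedSpace ℝ E]

open AffineMap (lineMap)

lemma dist_lineMap_lineMap_le (u v x : E) {s : ℝ} (hs : s ∈ Set.Icc (0 : ℝ) 1) (t : ℝ) :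
    dist (lineMap u x s) (lineMap v x t) ≤ dist u v + |s - t| * dist v x := by
  have hsame : dist (lineMap u x s) (lineMap v x s) ≤ dist u v := by
    have hsub : lineMap u x s - lineMap v x s = (1 - s) • (u - v) := by
      simp only [AffineMap.lineMap_apply_module]
      module
    rw [dist_eq_norm, hsub, norm_smul, Real.norm_of_nonneg (sub_nonneg.2 hs.2), ← dist_eq_norm]
    exact mul_le_of_le_one_left dist_nonneg (by linarith [hs.1])
  calc dist (lineMap u x s) (lineMap v x t)
      ≤ dist (lineMap u x s) (lineMap v x s) + dist (lineMap v x s) (lineMap v x t) :=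
        dist_triangle ..
    _ ≤ dist u v + |s - t| * dist v x := by
        rw [dist_lineMap_lineMap v x s t, Real.dist_eq]
        gcongr

lemma prism_lineMap_mem_smallChains {K K' : Set E} {x : E} {R : ℝ}
    (hK : K ⊆ Metric.closedBall x R) (hKK' : ∀ v ∈ K, segment ℝ v x ⊆ K') {s t : ℝ}
    (hs : s ∈ Set.Icc (0 : ℝ) 1) (ht : t ∈ Set.Icc (0 : ℝ) 1) {D D' : ℝ} (hD : D ≤ D')
    (hst : |s - t| * R ≤ D' - D) {m : ℕ} {c : OrderedChain E} (hc : c ∈ smallChains K D m) :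
    prism (lineMap · x s) (lineMap · x t) c ∈ smallChains K' D' (m + 1) := by
  have hmaps {τ : ℝ} (hτ : τ ∈ Set.Icc (0 : ℝ) 1) : Set.MapsTo (lineMap · x τ) K K' :=
    fun v hv => hKK' v hv (segment_eq_image_lineMap ℝ v x ▸ Set.mem_image_of_mem _ hτ)
  have hdist {σ τ : ℝ} (hσ : σ ∈ Set.Icc (0 : ℝ) 1) (hστ : |σ - τ| * R ≤ D' - D) (u : E) {v : E}
      (hv : v ∈ K) (huv : dist u v ≤ D) : dist (lineMap u x σ) (lineMap v x τ) ≤ D' := by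
    have hmul : |σ - τ| * dist v x ≤ |σ - τ| * R := by gcongr; exact hK hv
    linarith [dist_lineMap_lineMap_le u v x hσ τ]
  refine prism_mem_smallChains ?_ ?_ hc
  · rintro p (rfl | rfl)
    exacts [hmaps hs, hmaps ht]
  · have hself (τ : ℝ) : |τ - τ| * R ≤ D' - D := by simpa using hD
    rintro p (rfl | rfl) q (rfl | rfl) u - v hv huv
    exacts [hdist hs (hself s) u hv huv, hdist hs hst u hv huv,
      hdist ht (by rwa [abs_sub_comm]) u hv huv, hdist ht (hself t) u hv huv]

/-- Contracting to `x` in many small steps, the prisms between consecutive steps fill `z`. -/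
lemma exists_boundary_eq {K K' : Set E} (hK : Bornology.IsBounded K) {x : E} (hx : x ∈ K')
    (hKK' : ∀ v ∈ K, segment ℝ v x ⊆ K') {D D' : ℝ} (hD : 0 ≤ D) (hDD' : D < D') {m : ℕ}
    {z : OrderedChain E} (hz : z ∈ smallChains K D m) (hcycle : boundary z = 0) :
    ∃ c ∈ smallChains K' D' (m + 1), boundary c = z := by
  obtain ⟨R, hR0, hR⟩ := hK.subset_closedBall_lt 0 x
  obtain ⟨N, hN⟩ := exists_nat_gt (R / (D' - D))
  have hN0 : (0 : ℝ) < N := (div_pos hR0 (sub_pos.2 hDD')).trans hN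
  have htime {j : ℕ} (hj : j ≤ N) : (j / N : ℝ) ∈ Set.Icc (0 : ℝ) 1 :=
    ⟨by positivity, (div_le_one hN0).2 (by exact_mod_cast hj)⟩
  have hstep (j : ℕ) : |(j / N : ℝ) - (j + 1 : ℕ) / N| * R ≤ D' - D := by
    have hdiff : (j / N : ℝ) - (j + 1 : ℕ) / N = -(1 / N) := by
      push_cast
      ring
    rw [hdiff, abs_neg, abs_of_pos (by positivity), one_div_mul_eq_div, div_le_iff₀ hN0]
    exact ((div_lt_iff₀' (sub_pos.2 hDD')).1 hN).le
  let f (j : ℕ) (v : E) : E := lineMap v x (j / N : ℝ)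
  refine ⟨∑ j ∈ Finset.range N, prism (f j) (f (j + 1)) z + cone x (map (fun _ => x) z),
    Submodule.add_mem _ (Submodule.sum_mem _ fun j hj => ?_) ?_, ?_⟩
  · have hjN := Finset.mem_range.1 hj
    exact prism_lineMap_mem_smallChains hR hKK' (htime hjN.le) (htime hjN) hDD'.le (hstep j) hz
  · exact smallChains_mono (Set.singleton_subset_iff.2 hx) (hD.trans hDD'.le) _
      (cone_map_const_mem_smallChains hz x)
  · have hf0 : f 0 = id := by
      funext v
      simp [f]
    have hfN : f N = fun _ => x := by
      funext v
      simp [f, div_self hN0.ne']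
    rw [map_add, boundary_sum_prism f hcycle, boundary_cone, boundary_map, hcycle, map_zero,
      map_zero, add_zero, hf0, hfN, map_id, add_assoc, ZModModule.add_self, add_zero]

end Filling

end OrderedChain

/-! ### The sphere of a cross-polytope -/

section CrossPolytope

variable {E ι : Type*} [NormedAddCommGroup E] [NormedSpace ℝ E] [Fintype ι]

/-- The sphere of the `ℓ¹`-norm in the coordinates given by `e`, that is, the boundary of the
cross-polytope with vertices `±e i`. -/
def crossPolytopeSphere (e : ι → E) : Set E :=
  Fintype.linearCombination ℝ e '' {a | ∑ i, |a i| = 1}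

lemma isCompact_crossPolytopeSphere (e : ι → E) : IsCompact (crossPolytopeSphere e) := by
  have hbounded : {a : ι → ℝ | ∑ i, |a i| = 1} ⊆ Metric.closedBall 0 1 := fun a ha => by
    rw [mem_closedBall_zero_iff, pi_norm_le_iff_of_nonneg zero_le_one]
    exact fun i => ha ▸ Finset.single_le_sum (f := fun j => |a j|) (fun j _ => abs_nonneg (a j))
      (Finset.mem_univ i)
  have hclosed : IsClosed {a : ι → ℝ | ∑ i, |a i| = 1} :=
    isClosed_eq (by fun_prop) continuous_const
  exact ((isCompact_closedBall 0 1).of_isClosed_subset hclosed hbounded).image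
    (Fintype.linearCombination ℝ e).continuous_of_finiteDimensional

lemma neg_mem_crossPolytopeSphere {e : ι → E} {x : E} (hx : x ∈ crossPolytopeSphere e) :
    -x ∈ crossPolytopeSphere e := by
  obtain ⟨a, ha, rfl⟩ := hx
  exact ⟨-a, by simpa using ha, map_neg _ a⟩

lemma ne_zero_of_mem_crossPolytopeSphere {e : ι → E} (he : LinearIndependent ℝ e) {x : E}
    (hx : x ∈ crossPolytopeSphere e) : x ≠ 0 := by
  obtain ⟨a, ha, rfl⟩ := hx
  intro h0
  have ha0 : a = 0 := he.fintypeLinearCombination_injective (h0.trans (map_zero _).symm)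
  simp [ha0] at ha

lemma mem_crossPolytopeSphere_self (e : ι → E) (i : ι) : e i ∈ crossPolytopeSphere e := by
  classical
  exact ⟨Pi.single i 1, by simp [Pi.single_apply, apply_ite], by simp⟩

lemma segment_subset_crossPolytopeSphere {n : ℕ} (e : Fin (n + 1) → E) {v : E}
    (hv : v ∈ crossPolytopeSphere (Fin.tail e)) : segment ℝ v (e 0) ⊆ crossPolytopeSphere e := by
  obtain ⟨a, ha, rfl⟩ := hv
  rintro _ ⟨s, t, hs, ht, hst, rfl⟩
  refine ⟨Fin.cons t (s • a), ?_, ?_⟩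
  · simp only [Set.mem_ofPred_eq] at ha
    simp [Fin.sum_univ_succ, abs_mul, ← Finset.mul_sum, ha, abs_of_nonneg, hs, ht, add_comm, hst]
  · simp [Fintype.linearCombination_apply, Fin.sum_univ_succ, Fin.tail, mul_smul, Finset.smul_sum,
      add_comm]

open OrderedChain in
/-- The chain plays the role of a hemisphere: the next one fills the sphere formed by it and its
antipode. -/
lemma exists_antipodal_chain {n : ℕ} (e : Fin (n + 1) → E) {ε : ℝ} (hε : 0 < ε) :
    ∃ c ∈ smallChains (crossPolytopeSphere e) ε (n + 1),
      boundary (c + map Neg.neg c) = 0 ∧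
      ∀ ps : List (E → ZMod 2), ps.length = n →
        (∀ p ∈ ps, IsAntipodalOn p (crossPolytopeSphere e)) → eval (cupCoboundary ps) c = 1 := by
  induction n generalizing ε with
  | zero =>
    refine ⟨Finsupp.single [e 0] 1, ?_, ?_, ?_⟩
    · refine Finsupp.single_mem_supported _ _ ⟨rfl, ?_, ?_⟩
      · simpa using mem_crossPolytopeSphere_self e 0
      · simpa using hε.le
    · simp [ZModModule.add_self]
    · intro ps hps _
      rw [List.length_eq_zero_iff.1 hps, eval_single, cupCoboundary]
  | succ n ih =>
    obtain ⟨c, hc, hcycle, heval⟩ := ih (Fin.tail e) (half_pos hε)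
    have hneg : map Neg.neg c ∈ smallChains (crossPolytopeSphere (Fin.tail e)) (ε / 2) (n + 1) :=
      map_isometry_mem_smallChains (IsometryEquiv.neg E).isometry
        (fun _ => neg_mem_crossPolytopeSphere) hc
    obtain ⟨d, hd, hboundary⟩ := exists_boundary_eq
      (isCompact_crossPolytopeSphere (Fin.tail e)).isBounded
      (mem_crossPolytopeSphere_self e 0) (fun v hv => segment_subset_crossPolytopeSphere e hv)
      (half_pos hε).le (half_lt_self hε) (Submodule.add_mem _ hc hneg) hcycle
    refine ⟨d, hd, ?_, ?_⟩
    · rw [map_add, boundary_map, hboundary, map_add, map_neg_map_neg, add_comm (map _ c),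
        ZModModule.add_self]
    · rintro (_ | ⟨p, ps⟩) hlength hps
      · simp at hlength
      have htail : ∀ q ∈ p :: ps, IsAntipodalOn q (crossPolytopeSphere (Fin.tail e)) :=
        fun q hq v hv => hps q hq v
          (segment_subset_crossPolytopeSphere e hv (left_mem_segment ℝ v (e 0)))
      obtain ⟨hp, hps'⟩ := List.forall_mem_cons.1 htail
      rw [← eval_cupPrimitive_boundary (eval_cupCoboundary_comp_boundary ps), hboundary,
        eval_cupPrimitive_add_map_neg hp hps' (Finsupp.supported_mono (fun l hl => hl.2.1) hc)]
      exact heval ps (Nat.succ_injective hlength) hps'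

/-! ### The Borsuk-Ulam theorem -/

lemma exists_small_simplex_sign_change {e : Fin (Fintype.card ι + 1) → E}
    (he : LinearIndependent ℝ e) {f : ι → E → ℝ} (hf : ∀ i x, f i (-x) = -f i x) {ε : ℝ}
    (hε : 0 < ε) :
    ∃ l : List E, (∀ v ∈ l, v ∈ crossPolytopeSphere e) ∧ (∀ v ∈ l, ∀ w ∈ l, dist v w ≤ ε) ∧
      l ≠ [] ∧ ∀ i, ∃ v ∈ l, ∃ w ∈ l, f i v * f i w ≤ 0 := by
  have := IsAddTorsionFree.of_isTorsionFree ℝ E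
  choose p hp hpf using fun i => OrderedChain.exists_isAntipodalOn_compl_zero (hf i)
  obtain ⟨c, hc, -, heval⟩ := exists_antipodal_chain e hε
  let ps := (Finset.univ : Finset ι).toList.map p
  have hps : ∀ q ∈ ps, OrderedChain.IsAntipodalOn q (crossPolytopeSphere e) :=
    List.forall_mem_map.2 fun i _ v hv => hp i v (ne_zero_of_mem_crossPolytopeSphere he hv)
  obtain ⟨l, hl, hlps⟩ : ∃ l ∈ {l : List E | l.length = Fintype.card ι + 1 ∧
      (∀ v ∈ l, v ∈ crossPolytopeSphere e) ∧ ∀ v ∈ l, ∀ w ∈ l, dist v w ≤ ε},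
      OrderedChain.cupCoboundary ps l ≠ 0 := by
    by_contra! hzero
    have hmem : OrderedChain.eval (OrderedChain.cupCoboundary ps) c ∈
        (⊥ : Submodule (ZMod 2) (ZMod 2)) :=
      OrderedChain.map_mem_of_mem_supported _ (fun l hl => by simp [hzero l hl]) hc
    rw [heval ps (by simp [ps]) hps] at hmem
    exact one_ne_zero hmem
  refine ⟨l, hl.2.1, hl.2.2, List.ne_nil_of_length_eq_add_one hl.1, fun i => ?_⟩
  obtain ⟨v, hv, w, hw, hvw⟩ :=
    OrderedChain.exists_ne_of_cupCoboundary_ne_zero hlps (p := p i) (by simp [ps])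
  exact ⟨v, hv, w, hw, hpf i v w hvw⟩

theorem exists_forall_eq_zero_of_odd {e : Fin (Fintype.card ι + 1) → E}
    (he : LinearIndependent ℝ e) {f : ι → E → ℝ} (hf : ∀ i x, f i (-x) = -f i x)
    (hcont : ∀ i, ContinuousOn (f i) {0}ᶜ) : ∃ x ≠ 0, ∀ i, f i x = 0 := by
  by_contra! hne
  have hnhds : ∀ x ∈ crossPolytopeSphere e, ∃ i, {y | 0 < f i x * f i y} ∈ 𝓝 x := by
    intro x hx
    have hx0 := ne_zero_of_mem_crossPolytopeSphere he hx
    obtain ⟨i, hi⟩ := hne x hx0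
    have hc : ContinuousAt (fun y => f i x * f i y) x :=
      continuousAt_const.mul ((hcont i).continuousAt (isOpen_compl_singleton.mem_nhds hx0))
    exact ⟨i, hc.eventually_const_lt (mul_self_pos.2 hi)⟩
  choose i hi using hnhds
  obtain ⟨δ, hδ, hball⟩ := Metric.uniformity_basis_dist.lebesgue_number_lemma_nhds'
    (isCompact_crossPolytopeSphere e) hi
  obtain ⟨l, hlK, hldist, hl0, hsign⟩ := exists_small_simplex_sign_change he hf (half_pos hδ)
  obtain ⟨u, hu⟩ := List.exists_mem_of_ne_nil l hl0
  obtain ⟨x, hx⟩ := hball u (hlK u hu)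
  have hpos (v : E) (hv : v ∈ l) : 0 < f (i x x.2) x * f (i x x.2) v :=
    hx ((hldist u hu v hv).trans_lt (half_lt_self hδ))
  obtain ⟨v, hv, w, hw, hvw⟩ := hsign (i x x.2)
  nlinarith [mul_pos (hpos v hv) (hpos w hw), sq_nonneg (f (i x x.2) x)]

end CrossPolytope

section BorsukUlam

variable {E F : Type*} [NormedAddCommGroup E] [NormedSpace ℝ E] [NormedAddCommGroup F]
  [NormedSpace ℝ F] [FiniteDimensional ℝ F]

theorem exists_apply_eq_zero_of_odd_of_continuousOn
    (hEF : Module.finrank ℝ F < Module.finrank ℝ E) {f : E → F} (hf : ∀ x, f (-x) = -f x)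
    (hcont : ContinuousOn f {0}ᶜ) : ∃ x ≠ 0, f x = 0 := by
  let B := Module.finBasis ℝ F
  have hcard : Fintype.card (Fin (Module.finrank ℝ F)) + 1 ≤ Module.finrank ℝ E := by
    rwa [Fintype.card_fin]
  obtain ⟨e, he⟩ := exists_linearIndependent_of_le_finrank hcard
  obtain ⟨x, hx, hfx⟩ := exists_forall_eq_zero_of_odd (f := fun i y => B.coord i (f y)) he
    (fun i y => by rw [hf, map_neg])
    fun i => (B.coord i).continuous_of_finiteDimensional.comp_continuousOn hcont
  exact ⟨x, hx, B.forall_coord_eq_zero_iff.1 hfx⟩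

theorem exists_apply_eq_zero_of_odd_of_sphere (hEF : Module.finrank ℝ F < Module.finrank ℝ E)
    {r : ℝ} (hr : 0 < r) {f : Metric.sphere (0 : E) r → F} (hf : ∀ s, f (-s) = -f s)
    (hcont : Continuous f) : ∃ s, f s = 0 := by
  let g := Function.extend Subtype.val f 0
  have hg (s : Metric.sphere (0 : E) r) : g s = f s :=
    Subtype.val_injective.extend_apply f 0 s
  have hg_odd (x : E) : g (-x) = -g x := by
    by_cases hx : x ∈ Metric.sphere (0 : E) r
    · exact (hg (-⟨x, hx⟩)).trans ((hf ⟨x, hx⟩).trans (congrArg Neg.neg (hg ⟨x, hx⟩).symm))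
    · have hzero {y : E} (hy : y ∉ Metric.sphere (0 : E) r) : g y = 0 :=
        Function.extend_apply' f (0 : E → F) y fun ⟨s, hs⟩ => hy (hs ▸ s.2)
      rw [hzero hx, hzero (by simpa using hx), neg_zero]
  have hg_cont : ContinuousOn g (Metric.sphere 0 r) := by
    rw [continuousOn_iff_continuous_domRestrict]
    exact hcont.congr fun s => (hg s).symm
  have hretract : Set.MapsTo (fun x : E => (r / ‖x‖) • x) {0}ᶜ (Metric.sphere 0 r) := by
    intro x hx
    rw [mem_sphere_zero_iff_norm, norm_smul, norm_div, norm_norm, Real.norm_of_nonneg hr.le,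
      div_mul_cancel₀ r (norm_ne_zero_iff.2 hx)]
  have hretract_cont : ContinuousOn (fun x : E => (r / ‖x‖) • x) {0}ᶜ :=
    (continuousOn_const.div continuousOn_id.norm fun x hx => norm_ne_zero_iff.2 hx).smul
      continuousOn_id
  obtain ⟨x, hx, hgx⟩ := exists_apply_eq_zero_of_odd_of_continuousOn hEF
    (f := fun x => g ((r / ‖x‖) • x)) (fun x => by rw [norm_neg, smul_neg, hg_odd])
    (hg_cont.comp hretract_cont hretract)
  exact ⟨⟨_, hretract hx⟩, (hg _).symm.trans hgx⟩

theorem exists_apply_mem_of_odd_of_sphere {X : Type*} [NormedAddCommGroup X] [NormedSpace ℝ X]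
    {W : Submodule ℝ X} (hW : IsClosed (W : Set X)) [FiniteDimensional ℝ (X ⧸ W)]
    (hWE : Module.finrank ℝ (X ⧸ W) < Module.finrank ℝ E) {r : ℝ} (hr : 0 < r)
    {f : Metric.sphere (0 : E) r → X} (hf : ∀ s, f (-s) = -f s) (hcont : Continuous f) :
    ∃ s, f s ∈ W := by
  have := hW
  obtain ⟨s, hs⟩ := exists_apply_eq_zero_of_odd_of_sphere hWE hr
    (f := fun s => W.mkQL (f s)) (fun s => by rw [hf, map_neg]) (W.mkQL.continuous.comp hcont)
  exact ⟨s, (Submodule.Quotient.mk_eq_zero W).1 hs⟩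

end BorsukUlam

/-! ### Ekeland's variational principle -/

section Ekeland

variable {α : Type*} [PseudoMetricSpace α] {Φ : α → ℝ} {δ : ℝ}

/-- The points where `Φ` is below the downward cone of slope `δ` with vertex `(x, Φ x)`; membership
in it is the partial order of Ekeland's principle. -/
def ekelandSet (Φ : α → ℝ) (δ : ℝ) (x : α) : Set α :=
  {y | Φ y + δ * dist x y ≤ Φ x}

lemma self_mem_ekelandSet (x : α) : x ∈ ekelandSet Φ δ x := by
  simp [ekelandSet]

lemma ekelandSet_subset (hδ : 0 ≤ δ) {x y : α} (hy : y ∈ ekelandSet Φ δ x) :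
    ekelandSet Φ δ y ⊆ ekelandSet Φ δ x := by
  intro z hz
  have htriangle := mul_le_mul_of_nonneg_left (dist_triangle x y z) hδ
  simp only [ekelandSet, Set.mem_ofPred_eq] at hy hz ⊢
  linarith

lemma isClosed_ekelandSet (hΦ : LowerSemicontinuous Φ) (x : α) :
    IsClosed (ekelandSet Φ δ x) :=
  (hΦ.add (Continuous.lowerSemicontinuous (by fun_prop))).isClosed_preimage (Φ x)

lemma exists_mem_ekelandSet_forall_dist_le (hb : BddBelow (Set.range Φ)) (hδ : 0 < δ) (x : α)
    {η : ℝ} (hη : 0 < η) :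
    ∃ y ∈ ekelandSet Φ δ x, ∀ z ∈ ekelandSet Φ δ y, dist y z ≤ η := by
  have hbdd : BddBelow (Φ '' ekelandSet Φ δ x) := hb.mono (Set.image_subset_range _ _)
  obtain ⟨_, ⟨y, hy, rfl⟩, hlt⟩ := exists_lt_of_csInf_lt
    ((Set.nonempty_of_mem (self_mem_ekelandSet x)).image Φ)
    (lt_add_of_pos_right (sInf (Φ '' ekelandSet Φ δ x)) (mul_pos hδ hη))
  refine ⟨y, hy, fun z hz => le_of_mul_le_mul_left ?_ hδ⟩
  have hinf := csInf_le hbdd (Set.mem_image_of_mem Φ (ekelandSet_subset hδ.le hy hz))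
  simp only [ekelandSet, Set.mem_ofPred_eq] at hz
  linarith

end Ekeland

theorem exists_forall_lt_add_mul_dist {α : Type*} [MetricSpace α] [CompleteSpace α] {Φ : α → ℝ}
    (hΦ : LowerSemicontinuous Φ) (hb : BddBelow (Set.range Φ)) {δ : ℝ} (hδ : 0 < δ) (x₀ : α) :
    ∃ x, Φ x + δ * dist x₀ x ≤ Φ x₀ ∧ ∀ y ≠ x, Φ x < Φ y + δ * dist x y := by
  choose next hnext hdist using fun (n : ℕ) (x : α) =>
    exists_mem_ekelandSet_forall_dist_le hb hδ x (Nat.one_div_pos_of_nat (α := ℝ) (n := n))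
  let x : ℕ → α := fun n => Nat.rec x₀ next n
  have hanti : Antitone fun n => ekelandSet Φ δ (x n) :=
    antitone_nat_of_succ_le fun n => ekelandSet_subset hδ.le (hnext n (x n))
  have hsmall (n : ℕ) {z : α} (hz : z ∈ ekelandSet Φ δ (x (n + 1))) :
      dist (x (n + 1)) z ≤ 1 / ((n : ℝ) + 1) := hdist n (x n) z hz
  have hzero := tendsto_one_div_add_atTop_nhds_zero_nat (𝕜 := ℝ)
  have hcauchy : CauchySeq fun n => x (n + 1) := cauchySeq_of_le_tendsto_0' _
    (fun n m hnm => hsmall n (hanti (Nat.succ_le_succ hnm) (self_mem_ekelandSet _))) hzero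
  obtain ⟨y, hy⟩ := cauchySeq_tendsto_of_complete hcauchy
  have hmem (n : ℕ) : y ∈ ekelandSet Φ δ (x n) := (isClosed_ekelandSet hΦ _).mem_of_tendsto hy <|
    (eventually_ge_atTop n).mono fun m hm => hanti (hm.trans m.le_succ) (self_mem_ekelandSet _)
  refine ⟨y, hmem 0, fun z hzy => lt_of_not_ge fun hz => hzy ?_⟩
  have hlim : Tendsto (fun n => x (n + 1)) atTop (𝓝 z) := by
    rw [tendsto_iff_dist_tendsto_zero]
    exact squeeze_zero (fun _ => dist_nonneg)
      (fun n => hsmall n (ekelandSet_subset hδ.le (hmem (n + 1)) hz)) hzero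
  exact tendsto_nhds_unique hlim hy

/-! ### Deformation along a pseudo-gradient -/

section Deformation

variable {X : Type*} [NormedAddCommGroup X] [NormedSpace ℝ X]

lemma exists_norm_le_one_apply_lt_neg (φ : X →L[ℝ] ℝ) {η : ℝ} (hη : η < ‖φ‖) :
    ∃ v, ‖v‖ ≤ 1 ∧ φ v < -η := by
  obtain ⟨v, hv1, hv⟩ := φ.exists_lt_apply_of_lt_opNorm hη
  rcases lt_abs.1 hv with hpos | hneg
  · exact ⟨-v, (norm_neg v).trans_le hv1.le, by rw [map_neg]; linarith⟩
  · exact ⟨v, hv1.le, by linarith⟩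

/-- A pseudo-gradient of `L` when `φ = dL`. -/
lemma exists_continuous_forall_apply_lt_neg {T : Type*} [TopologicalSpace T] [NormalSpace T]
    [ParacompactSpace T] {φ : T → X →L[ℝ] ℝ} (hφ : Continuous φ) {M : Set T} (hM : IsClosed M)
    {η : ℝ} (hη : ∀ x ∈ M, η < ‖φ x‖) :
    ∃ V : C(T, X), ∀ x, ‖V x‖ ≤ 1 ∧ (x ∈ M → φ x (V x) < -η) := by
  refine exists_continuous_forall_mem_convex_of_local_const
    (t := fun x => {v | ‖v‖ ≤ 1 ∧ (x ∈ M → φ x v < -η)}) (fun x => ?_) fun x => ?_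
  · have hball : Convex ℝ {v : X | ‖v‖ ≤ 1} := by
      simpa only [Metric.closedBall, dist_zero_right] using convex_closedBall (0 : X) 1
    have hdescent : Convex ℝ {v : X | x ∈ M → φ x v < -η} :=
      fun v hv w hw c d hc hd hcd hx =>
        convex_halfSpace_lt (φ x).isLinear (-η) (hv hx) (hw hx) hc hd hcd
    exact hball.inter hdescent
  · by_cases hx : x ∈ M
    · obtain ⟨v, hv1, hv⟩ := exists_norm_le_one_apply_lt_neg (φ x) (hη x hx)
      have hc : ContinuousAt (fun y => φ y v) x := by fun_prop
      exact ⟨v, (hc.eventually_lt_const hv).mono fun y hy => ⟨hv1, fun _ => hy⟩⟩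
    · refine ⟨0, ?_⟩
      filter_upwards [hM.isOpen_compl.mem_nhds hx] with y hy
      exact ⟨by simp, fun hyM => absurd hyM hy⟩

lemma exists_odd_continuous_forall_apply_lt_neg {φ : X → X →L[ℝ] ℝ} (hφ : Continuous φ)
    (hodd : ∀ x, φ (-x) = -φ x) {M : Set X} (hM : IsClosed M) (hneg : ∀ x ∈ M, -x ∈ M) {η : ℝ}
    (hη : ∀ x ∈ M, η < ‖φ x‖) :
    ∃ V : C(X, X), (∀ x, V (-x) = -V x) ∧ (∀ x, ‖V x‖ ≤ 1) ∧ ∀ x ∈ M, φ x (V x) < -η := by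
  obtain ⟨V, hV⟩ := exists_continuous_forall_apply_lt_neg hφ hM hη
  refine ⟨⟨fun x => (2⁻¹ : ℝ) • (V x - V (-x)), by fun_prop⟩, fun x => ?_, fun x => ?_,
    fun x hx => ?_⟩
  · simp only [ContinuousMap.coe_mk, neg_neg, ← smul_neg, neg_sub]
  · calc ‖(2⁻¹ : ℝ) • (V x - V (-x))‖ ≤ 2⁻¹ * (‖V x‖ + ‖V (-x)‖) := by
          rw [norm_smul, Real.norm_of_nonneg (by norm_num)]
          gcongr
          exact norm_sub_le _ _
      _ ≤ 1 := by linarith [(hV x).1, (hV (-x)).1]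
  · have hVneg := (hV (-x)).2 (hneg x hx)
    rw [hodd, neg_apply] at hVneg
    simp only [ContinuousMap.coe_mk, map_smul, map_sub, smul_eq_mul]
    linarith [(hV x).2 hx]

variable {L : X → ℝ} {dL : X → X →L[ℝ] ℝ}

lemma apply_neg_of_even_of_hasFDerivAt (hderiv : ∀ x, HasFDerivAt L (dL x) x)
    (heven : ∀ x, L (-x) = L x) (x : X) : dL (-x) = -dL x := by
  have hneg : HasFDerivAt (fun y => L (-y)) ((dL (-x)).comp (-ContinuousLinearMap.id ℝ X)) x :=
    (hderiv (-x)).comp x (hasFDerivAt_id x).neg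
  simp only [heven] at hneg
  rw [← hneg.unique (hderiv x)]
  ext v
  simp

lemma apply_add_smul_le (hderiv : ∀ x, HasFDerivAt L (dL x) x) {x v : X} {t C : ℝ} (ht : 0 ≤ t)
    (hC : ∀ τ ∈ Set.Ioo 0 t, dL (x + τ • v) v ≤ C) : L (x + t • v) ≤ L x + C * t := by
  have hline (τ : ℝ) : HasDerivAt (fun τ : ℝ => L (x + τ • v)) (dL (x + τ • v) v) τ :=
    (hderiv _).comp_hasDerivAt τ (by simpa using ((hasDerivAt_id τ).smul_const v).const_add x)
  have hmean := (convex_Icc (0 : ℝ) t).image_sub_le_mul_sub_of_deriv_le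
    (fun τ _ => (hline τ).continuousAt.continuousWithinAt)
    (fun τ _ => (hline τ).differentiableAt.differentiableWithinAt)
    (fun τ hτ => by
      rw [interior_Icc] at hτ
      exact (hline τ).deriv.trans_le (hC τ hτ))
    0 ⟨le_rfl, ht⟩ t ⟨ht, le_rfl⟩ ht
  simp only [zero_smul, add_zero, sub_zero] at hmean
  linarith

/-- Where `L` is far below `m` it cannot increase to `m` in a short time; elsewhere it decreases at
the rate `η`. -/
lemma exists_pos_forall_le_sub_mul {S : Type*} [TopologicalSpace S] [CompactSpace S]
    (hderiv : ∀ x, HasFDerivAt L (dL x) x) (hcont : Continuous dL) (h V : C(S, X)) {m ε η : ℝ}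
    (hε : 0 < ε) (hm : ∀ s, L (h s) ≤ m) (hV : ∀ s, m - ε ≤ L (h s) → dL (h s) (V s) < -η) :
    ∃ t > 0, ∀ s, L (h s + t • V s) ≤ m - η * t := by
  have hLc : Continuous L := continuous_iff_continuousAt.2 fun x => (hderiv x).continuousAt
  have hhigh : IsCompact {s | m - ε ≤ L (h s)} :=
    (isClosed_le continuous_const (by fun_prop)).isCompact
  have hdescent : ∀ᶠ t in 𝓝 (0 : ℝ), ∀ s ∈ {s | m - ε ≤ L (h s)},
      dL (h s + t • V s) (V s) < -η := by
    refine hhigh.eventually_forall_of_forall_eventually fun s hs => ?_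
    have hc : Continuous fun z : ℝ × S => dL (h z.2 + z.1 • V z.2) (V z.2) := by fun_prop
    exact hc.continuousAt.eventually_lt_const (by simpa using hV s hs)
  have hincrease : ∀ᶠ t in 𝓝 (0 : ℝ), ∀ s ∈ (Set.univ : Set S),
      L (h s + t • V s) + η * t < L (h s) + ε := by
    refine isCompact_univ.eventually_forall_of_forall_eventually fun s _ => ?_
    have hc : Continuous fun z : ℝ × S =>
        L (h z.2 + z.1 • V z.2) + η * z.1 - L (h z.2) := by fun_prop
    have hlt := (hc.tendsto ((0 : ℝ), s)).eventually_lt_const (u := ε) (by simpa using hε)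
    exact hlt.mono fun z hz => sub_lt_iff_lt_add'.1 hz
  obtain ⟨ρ, hρ, hball⟩ := Metric.eventually_nhds_iff.1 (hdescent.and hincrease)
  have hnear {τ : ℝ} (hτ : 0 < τ) (hτρ : τ ≤ ρ / 2) : dist τ 0 < ρ := by
    rw [Real.dist_0_eq_abs, abs_of_pos hτ]
    linarith
  refine ⟨ρ / 2, half_pos hρ, fun s => ?_⟩
  rcases le_or_gt (m - ε) (L (h s)) with hs | hs
  · have hmean := apply_add_smul_le hderiv (half_pos hρ).le fun τ hτ =>
      ((hball (hnear hτ.1 hτ.2.le)).1 s hs).le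
    linarith [hm s]
  · linarith [(hball (hnear (half_pos hρ) le_rfl)).2 s trivial]

end Deformation

/-! ### Minimax over odd maps -/

section Minimax

variable {X : Type*} [NormedAddCommGroup X] [NormedSpace ℝ X] {L : X → ℝ} {dL : X → X →L[ℝ] ℝ}

lemma isClosed_setOf_odd {S Y : Type*} [TopologicalSpace S] [Neg S] [TopologicalSpace Y]
    [T2Space Y] [Neg Y] [ContinuousNeg Y] :
    IsClosed {h : C(S, Y) | ∀ s, h (-s) = -h s} := by
  simp only [Set.ofPred_forall]
  exact isClosed_iInter fun s => isClosed_eq (by fun_prop) (by fun_prop)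

lemma exists_odd_deformation {S : Type*} [TopologicalSpace S] [CompactSpace S] [Neg S]
    (hderiv : ∀ x, HasFDerivAt L (dL x) x) (hcont : Continuous dL) (heven : ∀ x, L (-x) = L x)
    {m ε η : ℝ} (hε : 0 < ε) (hslope : ∀ x, L x ∈ Set.Icc (m - ε) m → η < ‖dL x‖)
    {h : C(S, X)} (hodd : ∀ s, h (-s) = -h s) (hm : ∀ s, L (h s) ≤ m) :
    ∃ t > 0, ∃ g : C(S, X), (∀ s, g (-s) = -g s) ∧ dist h g ≤ t ∧ ∀ s, L (g s) ≤ m - η * t := by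
  have hL : Continuous L := continuous_iff_continuousAt.2 fun x => (hderiv x).continuousAt
  obtain ⟨V, hVodd, hVnorm, hV⟩ := exists_odd_continuous_forall_apply_lt_neg hcont
    (apply_neg_of_even_of_hasFDerivAt hderiv heven) (M := L ⁻¹' Set.Icc (m - ε) m)
    (isClosed_Icc.preimage hL) (fun x hx => by rwa [Set.mem_preimage, heven]) hslope
  obtain ⟨t, ht, hdecrease⟩ := exists_pos_forall_le_sub_mul hderiv hcont h (V.comp h) hε hm
    fun s hs => hV _ ⟨hs, hm s⟩
  refine ⟨t, ht, h + t • V.comp h, fun s => ?_, ?_, hdecrease⟩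
  · simp only [ContinuousMap.add_apply, ContinuousMap.smul_apply, ContinuousMap.comp_apply, hodd,
      hVodd, smul_neg, neg_add]
  · refine (ContinuousMap.dist_le ht.le).2 fun s => ?_
    simp only [ContinuousMap.add_apply, ContinuousMap.smul_apply, ContinuousMap.comp_apply,
      dist_self_add_right, norm_smul, Real.norm_of_nonneg ht.le]
    exact mul_le_of_le_one_right ht.le (hVnorm _)

theorem exists_almost_critical_of_odd_linking [CompleteSpace X] {S : Type*} [TopologicalSpace S]
    [CompactSpace S] [Neg S] (hderiv : ∀ x, HasFDerivAt L (dL x) x)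
    (hcont : Continuous dL) (heven : ∀ x, L (-x) = L x) {a b : ℝ} {h₀ : C(S, X)}
    (hh₀ : ∀ s, h₀ (-s) = -h₀ s) (ha : ∀ s, L (h₀ s) ≤ a)
    (hlink : ∀ h : C(S, X), (∀ s, h (-s) = -h s) → ∃ s, b ≤ L (h s)) {ε : ℝ} (hε : 0 < ε) :
    ∃ x, L x ∈ Set.Icc (b - ε) a ∧ ‖dL x‖ ≤ ε := by
  have hL : Continuous L := continuous_iff_continuousAt.2 fun x => (hderiv x).continuousAt
  have : Nonempty S := (hlink h₀ hh₀).nonempty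
  let Γ := {h : C(S, X) | ∀ s, h (-s) = -h s}
  have : CompleteSpace Γ := isClosed_setOf_odd.completeSpace_coe
  have hbdd (h : Γ) : BddAbove (Set.range fun s => L (h.1 s)) :=
    (isCompact_range (by fun_prop)).bddAbove
  let Φ : Γ → ℝ := fun h => ⨆ s, L (h.1 s)
  have hle (h : Γ) (s : S) : L (h.1 s) ≤ Φ h := le_ciSup (hbdd h) s
  have hΦ : LowerSemicontinuous Φ := lowerSemicontinuous_ciSup hbdd
    fun s => Continuous.lowerSemicontinuous (by fun_prop)
  have hΦb (h : Γ) : b ≤ Φ h := (hlink h.1 h.2).elim fun s hs => hs.trans (hle h s)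
  obtain ⟨h, hhh₀, hmin⟩ := exists_forall_lt_add_mul_dist hΦ
    ⟨b, Set.forall_mem_range.2 hΦb⟩ hε ⟨h₀, hh₀⟩
  have hΦa : Φ h ≤ a := by
    have hdist : 0 ≤ ε * dist (⟨h₀, hh₀⟩ : Γ) h := by positivity
    linarith [ciSup_le ha]
  by_contra! hno
  obtain ⟨t, ht, g, hg, hdist, hdecrease⟩ := exists_odd_deformation hderiv hcont heven hε
    (fun x hx => hno x ⟨(sub_le_sub_right (hΦb h) ε).trans hx.1, hx.2.trans hΦa⟩) h.2 (hle h)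
  have hΦg : Φ ⟨g, hg⟩ ≤ Φ h - ε * t := ciSup_le hdecrease
  have hne : (⟨g, hg⟩ : Γ) ≠ h := fun heq => by
    rw [heq] at hΦg
    linarith [mul_pos hε ht]
  have hlt := hmin _ hne
  rw [Subtype.dist_eq] at hlt
  linarith [mul_le_mul_of_nonneg_left hdist hε.le]

lemma exists_critical_of_palaisSmaleC (hL : Continuous L) (hcont : Continuous dL) {a b : ℝ}
    (hPS : ∀ c ∈ Set.Icc b a, PalaisSmaleC L dL c)
    (halmost : ∀ ε > 0, ∃ x, L x ∈ Set.Icc (b - ε) a ∧ ‖dL x‖ ≤ ε) :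
    ∃ u, dL u = 0 ∧ L u ∈ Set.Icc b a := by
  choose x hxL hxd using fun n : ℕ => halmost (1 / (n + 1)) Nat.one_div_pos_of_nat
  have hzero := tendsto_one_div_add_atTop_nhds_zero_nat (𝕜 := ℝ)
  have hbounded (n : ℕ) : L (x n) ∈ Set.Icc (b - 1) a := by
    have hn : 1 / ((n : ℝ) + 1) ≤ 1 := by simpa using Nat.one_div_le_one_div (α := ℝ) n.zero_le
    exact ⟨(sub_le_sub_left hn b).trans (hxL n).1, (hxL n).2⟩
  obtain ⟨c, hc, φ, hφ, hlim⟩ := isCompact_Icc.tendsto_subseq hbounded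
  have hbc : b ≤ c := by
    have hlower := (hzero.comp hφ.tendsto_atTop).const_sub b
    rw [sub_zero] at hlower
    exact le_of_tendsto_of_tendsto' hlower hlim fun n => (hxL (φ n)).1
  have hslope : Tendsto (fun n => ‖dL (x (φ n))‖) atTop (𝓝 0) :=
    squeeze_zero (fun _ => norm_nonneg _) (fun n => hxd (φ n)) (hzero.comp hφ.tendsto_atTop)
  obtain ⟨u, ψ, hψ, hu⟩ := hPS c ⟨hbc, hc.2⟩ (x ∘ φ) hlim hslope
  have hdu : ‖dL u‖ = 0 :=
    tendsto_nhds_unique ((hcont.norm.tendsto u).comp hu) (hslope.comp hψ.tendsto_atTop)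
  have hLu : L u = c := tendsto_nhds_unique ((hL.tendsto u).comp hu) (hlim.comp hψ.tendsto_atTop)
  exact ⟨u, norm_eq_zero.1 hdu, hLu ▸ ⟨hbc, hc.2⟩⟩

theorem le_and_exists_critical_of_sphere_linking [CompleteSpace X]
    (hderiv : ∀ x, HasFDerivAt L (dL x) x) (hcont : Continuous dL) (heven : ∀ x, L (-x) = L x)
    {Y W : Submodule ℝ X} (hW : IsClosed (W : Set X)) [FiniteDimensional ℝ (X ⧸ W)]
    (hYW : Module.finrank ℝ (X ⧸ W) < Module.finrank ℝ Y) {r : ℝ} (hr : 0 < r) {a b : ℝ}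
    (ha : ∀ u ∈ Y, ‖u‖ = r → L u ≤ a) (hb : ∀ u ∈ W, b ≤ L u) :
    b ≤ a ∧ ((∀ c ∈ Set.Icc b a, PalaisSmaleC L dL c) → ∃ u, dL u = 0 ∧ L u ∈ Set.Icc b a) := by
  have : FiniteDimensional ℝ Y := Module.finite_of_finrank_pos (Nat.zero_lt_of_lt hYW)
  have hlink (h : C(Metric.sphere (0 : Y) r, X)) (hodd : ∀ s, h (-s) = -h s) : ∃ s, b ≤ L (h s) :=
    (exists_apply_mem_of_odd_of_sphere hW hYW hr hodd h.continuous).imp fun s => hb (h s)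
  let ι : C(Metric.sphere (0 : Y) r, X) := ⟨fun s => ((s : Y) : X), by fun_prop⟩
  have hι (s : Metric.sphere (0 : Y) r) : L (ι s) ≤ a :=
    ha _ s.1.2 (mem_sphere_zero_iff_norm.1 s.2)
  have hι_odd (s : Metric.sphere (0 : Y) r) : ι (-s) = -ι s := rfl
  obtain ⟨s, hs⟩ := hlink ι hι_odd
  have hL : Continuous L := continuous_iff_continuousAt.2 fun x => (hderiv x).continuousAt
  exact ⟨hs.trans (hι s), fun hPS => exists_critical_of_palaisSmaleC hL hcont hPS fun ε hε =>
    exists_almost_critical_of_odd_linking hderiv hcont heven hι_odd hι hlink hε⟩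

end Minimax

section SchauderBasis

variable {X : Type*} [NormedAddCommGroup X] [NormedSpace ℝ X] {e : ℕ → X}

lemma span_range_mkQ_eq_top (he : (Submodule.span ℝ (Set.range e)).topologicalClosure = ⊤)
    {W : Submodule ℝ X} (hW : IsClosed (W : Set X)) {k : ℕ} (htail : ∀ j ≥ k, e j ∈ W) :
    Submodule.span ℝ (Set.range fun j : Fin k => W.mkQ (e j)) = ⊤ := by
  let E := Submodule.span ℝ (Set.range fun j : Fin k => e j)
  have : FiniteDimensional ℝ E := FiniteDimensional.span_of_finite ℝ (Set.finite_range _)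
  have hsup_closed : IsClosed ((W ⊔ E : Submodule ℝ X) : Set X) :=
    Submodule.isClosed_sup_finiteDimensional _ _ hW
  have hmem : Set.range e ⊆ (W ⊔ E : Submodule ℝ X) := by
    rintro _ ⟨j, rfl⟩
    rcases lt_or_ge j k with hj | hj
    · exact Submodule.mem_sup_right (Submodule.subset_span ⟨⟨j, hj⟩, rfl⟩)
    · exact Submodule.mem_sup_left (htail j hj)
  have hsup : W ⊔ E = ⊤ := top_le_iff.1 <|
    he ▸ Submodule.topologicalClosure_minimal _ (Submodule.span_le.2 hmem) hsup_closed
  have hmap : E.map W.mkQ = ⊤ := (Submodule.map_mkQ_eq_top W E).2 hsup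
  rwa [Submodule.map_span, ← Set.range_comp] at hmap

lemma finiteDimensional_quotient_and_finrank_le
    (he : (Submodule.span ℝ (Set.range e)).topologicalClosure = ⊤) {W : Submodule ℝ X}
    (hW : IsClosed (W : Set X)) {k : ℕ} (htail : ∀ j ≥ k, e j ∈ W) :
    FiniteDimensional ℝ (X ⧸ W) ∧ Module.finrank ℝ (X ⧸ W) ≤ k := by
  have hspan := span_range_mkQ_eq_top he hW htail
  have : FiniteDimensional ℝ (X ⧸ W) :=
    Module.finite_def.2 (hspan ▸ Submodule.fg_span (Set.finite_range _))
  exact ⟨this, by simpa only [Fintype.card_fin] using finrank_le_of_span_eq_top hspan⟩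

lemma linearIndependent_of_unique_expansion (hbasis : ∀ x : X, ∃! a : ℕ → ℝ,
      Tendsto (fun n => ∑ j ∈ Finset.range n, a j • e j) atTop (𝓝 x)) :
    LinearIndependent ℝ e := by
  rw [linearIndependent_iff]
  intro l hl
  have hzero : Tendsto (fun n => ∑ j ∈ Finset.range n, (0 : ℕ → ℝ) j • e j) atTop (𝓝 0) := by simp
  obtain ⟨N, hN⟩ := l.support.exists_nat_subset_range
  have hfinite : Tendsto (fun n => ∑ j ∈ Finset.range n, l j • e j) atTop (𝓝 0) := by
    refine tendsto_const_nhds.congr' ((eventually_ge_atTop N).mono fun n hn => ?_)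
    rw [← hl, Finsupp.linearCombination_apply]
    refine Finset.sum_subset (hN.trans (Finset.range_mono hn)) fun i _ hi => ?_
    simp only [Finsupp.notMem_support_iff.1 hi, zero_smul]
  exact DFunLike.coe_injective ((hbasis 0).unique hfinite hzero)

lemma topologicalClosure_span_range_eq_top_of_expansion (hexp : ∀ x : X, ∃ a : ℕ → ℝ,
      Tendsto (fun n => ∑ j ∈ Finset.range n, a j • e j) atTop (𝓝 x)) :
    (Submodule.span ℝ (Set.range e)).topologicalClosure = ⊤ := by
  refine eq_top_iff.2 fun x _ => ?_
  obtain ⟨a, ha⟩ := hexp x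
  exact mem_closure_of_tendsto ha <| Eventually.of_forall fun n => Submodule.sum_mem _ fun j _ =>
    Submodule.smul_mem _ _ (Submodule.subset_span ⟨j, rfl⟩)

end SchauderBasis

theorem stmt11_general {X : Type*} [NormedAddCommGroup X] [NormedSpace ℝ X] [CompleteSpace X]
    {e : ℕ → X} {k : ℕ} (hli : LinearIndepOn ℝ e (Set.Iio (k + 1)))
    (hdense : (Submodule.span ℝ (Set.range e)).topologicalClosure = ⊤)
    {L : X → ℝ} {dL : X → X →L[ℝ] ℝ} (hderiv : ∀ x, HasFDerivAt L (dL x) x)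
    (hcont : Continuous dL) (heven : ∀ x : X, L (-x) = L x) {r : ℝ} (hr : 0 < r) {a b : ℝ}
    (hL3 : ∀ u ∈ Submodule.span ℝ (e '' Set.Iio (k + 1)), ‖u‖ = r → L u ≤ a)
    (hL4 : ∀ t : ℝ, ∀ z ∈ (Submodule.span ℝ (e '' Set.Ici (k + 1))).topologicalClosure,
      b ≤ L (t • e k + z)) :
    b ≤ a ∧ ((∀ c ∈ Set.Icc b a, PalaisSmaleC L dL c) →
      ∃ u : X, dL u = 0 ∧ L u ∈ Set.Icc b a) := by
  set Y := Submodule.span ℝ (e '' Set.Iio (k + 1))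
  set Z := (Submodule.span ℝ (e '' Set.Ici (k + 1))).topologicalClosure
  have hY : Module.finrank ℝ Y = k + 1 := by
    have hcard := finrank_span_eq_card hli
    rwa [← Set.image_eq_range, Fintype.card_Iio, Nat.card_Iio] at hcard
  have hW : IsClosed ((Z ⊔ Submodule.span ℝ {e k} : Submodule ℝ X) : Set X) :=
    Submodule.isClosed_sup_finiteDimensional _ _ (Submodule.isClosed_topologicalClosure _)
  have htail : ∀ j ≥ k, e j ∈ Z ⊔ Submodule.span ℝ {e k} := by
    intro j hj
    rcases hj.eq_or_lt with rfl | hj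
    · exact Submodule.mem_sup_right (Submodule.mem_span_singleton_self _)
    · exact Submodule.mem_sup_left (Submodule.le_topologicalClosure _
        (Submodule.subset_span ⟨j, hj, rfl⟩))
  obtain ⟨_, hcodim⟩ := finiteDimensional_quotient_and_finrank_le hdense hW htail
  refine le_and_exists_critical_of_sphere_linking hderiv hcont heven hW
    (hY ▸ Nat.lt_succ_of_le hcodim) hr hL3 fun u hu => ?_
  obtain ⟨z, hz, _, hw, rfl⟩ := Submodule.mem_sup.1 hu
  obtain ⟨t, rfl⟩ := Submodule.mem_span_singleton.1 hw
  rw [add_comm]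
  exact hL4 t z hz

/-- Theorem 4.3 of the paper.  The Schauder basis `(e_j)_{j≥1}` of the paper is
encoded as `e : ℕ → X` (Lean index `j` is the paper index `j+1`); the Lean index
`k` corresponds to the paper index `k+1`, so the paper's `Y_k = span{e_1,…,e_k}`
is `span (e '' Set.Iio (k+1))`, the paper's `e_k` is `e k`, and the paper's
`Z_{k+1} = cl span{e_j : j ≥ k+1}` is the closure of `span (e '' Set.Ici (k+1))`.
Under `(L₃)` and `(L₄)` one has `b ≤ a`, and if `L` satisfies `(PS)_c` for all
`c ∈ [b, a]`, then `L` has a critical point with critical value in `[b, a]`. -/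
theorem stmt11 {X : Type*} [NormedAddCommGroup X] [NormedSpace ℝ X] [CompleteSpace X]
    (e : ℕ → X)
    (hbasis : ∀ x : X, ∃! a : ℕ → ℝ,
      Tendsto (fun n => ∑ j ∈ Finset.range n, a j • e j) atTop (𝓝 x))
    (L : X → ℝ) (dL : X → X →L[ℝ] ℝ)
    (hderiv : ∀ x, HasFDerivAt L (dL x) x) (hcont : Continuous dL)
    (heven : ∀ x : X, L (-x) = L x)
    (k : ℕ) (r : ℝ) (hr : 0 < r) (a b : ℝ)
    (hL3 : ∀ u ∈ Submodule.span ℝ (e '' Set.Iio (k + 1)), ‖u‖ = r → L u ≤ a)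
    (hL4 : ∀ t : ℝ, ∀ z ∈ (Submodule.span ℝ (e '' Set.Ici (k + 1))).topologicalClosure,
      b ≤ L (t • e k + z)) :
    b ≤ a ∧ ((∀ c ∈ Set.Icc b a, PalaisSmaleC L dL c) →
      ∃ u : X, dL u = 0 ∧ L u ∈ Set.Icc b a) := by
  exact stmt11_general ((linearIndependent_of_unique_expansion hbasis).linearIndepOn _)
    (topologicalClosure_span_range_eq_top_of_expansion fun x => (hbasis x).exists)
    hderiv hcont heven hr hL3 hL4
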